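/- Let ‖·‖ be an arbitrary norm on ℝ^d, let τ > 0, and let x : [0, τ] → ℝ^d be a twice continuously differentiable curve. Then for every t ∈ [0, τ], the distance (measured in ‖·‖) from the point x(t) to the line segment joining x(0) and x(τ) is at most (τ²/8) · sup_{s ∈ [0, τ]} ‖x''(s)‖. -/

import Mathlib

/-!
Compare `x(t)` with the point `z = (1 - t/τ) x(0) + (t/τ) x(τ)` of the chord. By Hahn–Banach
(`exists_norming_functional`) some linear `φ ≤ f` satisfies `φ (x(t) - z) = f (x(t) - z)`, which
reduces the claim to the real function `g = φ ∘ x`. With `M = sup f(x'')` one has `g'' ≥ -M`, so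
`g(s) + M s² / 2` is convex and `g` exceeds its chord at `t` by at most
`M t (τ - t) / 2 ≤ M τ² / 8` (`le_chord_add`).
-/

open Set

/-- `f : ℝ^d → ℝ` is a norm. -/
def IsNorm {d : ℕ} (f : (Fin d → ℝ) → ℝ) : Prop :=
  (∀ x, 0 ≤ f x) ∧ (∀ x, f x = 0 ↔ x = 0) ∧
  (∀ (c : ℝ) (x), f (c • x) = |c| * f x) ∧
  (∀ x y, f (x + y) ≤ f x + f y)

/-- Hahn–Banach for a norm given as a bare function: every vector has a norming functional. -/
theorem exists_norming_functional {d : ℕ} {f : (Fin d → ℝ) → ℝ} (hf : IsNorm f)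
    (v : Fin d → ℝ) : ∃ φ : (Fin d → ℝ) →ₗ[ℝ] ℝ, φ v = f v ∧ ∀ y, φ y ≤ f y := by
  obtain ⟨h0, h1, h2, h3⟩ := hf
  by_cases hv : v = 0
  · exact ⟨0, by simp [(h1 v).2 hv], fun y => by simpa using h0 y⟩
  obtain ⟨φ, hφ, hle⟩ := exists_extension_of_le_sublinear
    (LinearPMap.mkSpanSingleton (K := ℝ) v (f v) hv) f
    (fun c hc y => by rw [h2, abs_of_pos hc]) h3 (by
      rintro ⟨y, hy⟩
      obtain ⟨c, rfl⟩ := Submodule.mem_span_singleton.1 hy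
      rw [LinearPMap.mkSpanSingleton'_apply, h2, smul_eq_mul]
      exact mul_le_mul_of_nonneg_right (le_abs_self c) (h0 v))
  refine ⟨φ, ?_, hle⟩
  have := hφ ⟨v, Submodule.mem_span_singleton_self v⟩
  rw [this]
  exact LinearPMap.mkSpanSingleton_apply ℝ ℝ hv (f v)

theorem IsNorm.continuous {d : ℕ} {f : (Fin d → ℝ) → ℝ} (hf : IsNorm f) : Continuous f := by
  obtain ⟨-, -, h2, h3⟩ := hf
  have hconv : ConvexOn ℝ univ f := by
    refine ⟨convex_univ, fun y _ z _ a b ha hb _ => ?_⟩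
    have := h3 (a • y) (b • z)
    rwa [h2, h2, abs_of_nonneg ha, abs_of_nonneg hb] at this
  exact continuousOn_univ.1 (hconv.continuousOn isOpen_univ)

/-- Scalar form of the estimate: if `g'' ≥ -M`, then `g(s) + M s² / 2` is convex, so `g` exceeds
its chord by at most `M t (τ - t) / 2`. -/
theorem le_chord_add {τ M : ℝ} (hτ : 0 < τ) {g g' g'' : ℝ → ℝ}
    (hg' : ∀ t ∈ Set.Icc (0 : ℝ) τ, HasDerivWithinAt g (g' t) (Set.Icc 0 τ) t)
    (hg'' : ∀ t ∈ Set.Icc (0 : ℝ) τ, HasDerivWithinAt g' (g'' t) (Set.Icc 0 τ) t)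
    (hM : ∀ t ∈ Set.Icc (0 : ℝ) τ, -M ≤ g'' t) {t : ℝ} (ht : t ∈ Set.Icc (0 : ℝ) τ) :
    g t ≤ (1 - t / τ) * g 0 + t / τ * g τ + M * t * (τ - t) / 2 := by
  have hconv : ConvexOn ℝ (Icc 0 τ) (fun s => g s + M / 2 * s ^ 2) := by
    refine convexOn_of_hasDerivWithinAt2_nonneg (convex_Icc 0 τ) (f' := fun s => g' s + M * s)
      (f'' := fun s => g'' s + M) ?_ ?_ ?_ ?_
    · have : ContinuousOn g (Icc 0 τ) := fun s hs => (hg' s hs).continuousWithinAt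
      fun_prop
    · intro s hs
      have h := ((hasDerivAt_pow 2 s).const_mul (M / 2)).hasDerivWithinAt (s := interior (Icc 0 τ))
      refine (((hg' s (interior_subset hs)).mono interior_subset).add h).congr_deriv ?_
      norm_num
      ring
    · intro s hs
      have h := ((hasDerivAt_id s).const_mul M).hasDerivWithinAt (s := interior (Icc 0 τ))
      refine (((hg'' s (interior_subset hs)).mono interior_subset).add h).congr_deriv ?_
      ring
    · intro s hs
      linarith [hM s (interior_subset hs)]
  have h := hconv.2 (left_mem_Icc.2 hτ.le) (right_mem_Icc.2 hτ.le)
    (sub_nonneg.2 ((div_le_one hτ).2 ht.2)) (div_nonneg ht.1 hτ.le)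
    (sub_add_cancel 1 (t / τ))
  have e : t / τ * τ = t := div_mul_cancel₀ t hτ.ne'
  simp only [smul_eq_mul, mul_zero, zero_add, e] at h
  have e2 : t / τ * τ ^ 2 = t * τ := by rw [pow_two, ← mul_assoc, e]
  linear_combination h + M / 2 * e2

/-- For a `C²` curve `x : [0, τ] → ℝ^d` and an arbitrary norm `f`, the `f`-distance
from `x(t)` to the segment `[x(0), x(τ)]` is at most `(τ²/8) · sup_{[0,τ]} f(x'')`. -/
theorem dist_to_chord_le (d : ℕ) (f : (Fin d → ℝ) → ℝ) (hf : IsNorm f)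
    (τ : ℝ) (hτ : 0 < τ) (x x' x'' : ℝ → Fin d → ℝ)
    (hx' : ∀ t ∈ Set.Icc (0 : ℝ) τ, HasDerivWithinAt x (x' t) (Set.Icc 0 τ) t)
    (hx'' : ∀ t ∈ Set.Icc (0 : ℝ) τ, HasDerivWithinAt x' (x'' t) (Set.Icc 0 τ) t)
    (hcont : ContinuousOn x'' (Set.Icc 0 τ)) :
    ∀ t ∈ Set.Icc (0 : ℝ) τ,
      sInf {r : ℝ | ∃ z ∈ segment ℝ (x 0) (x τ), r = f (x t - z)} ≤
        τ ^ 2 / 8 * sSup {r : ℝ | ∃ s ∈ Set.Icc (0 : ℝ) τ, r = f (x'' s)} := by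
  intro t ht
  set M := sSup {r : ℝ | ∃ s ∈ Set.Icc (0 : ℝ) τ, r = f (x'' s)} with hMdef
  have hle : ∀ s ∈ Icc (0 : ℝ) τ, f (x'' s) ≤ M := by
    intro s hs
    refine le_csSup ?_ ⟨s, hs, rfl⟩
    refine (isCompact_Icc.bddAbove_image (hf.continuous.comp_continuousOn hcont)).mono ?_
    rintro r ⟨u, hu, rfl⟩
    exact ⟨u, hu, rfl⟩
  have hM0 : 0 ≤ M := (hf.1 _).trans (hle t ht)
  set z := (1 - t / τ) • x 0 + (t / τ) • x τ with hz
  have hzmem : z ∈ segment ℝ (x 0) (x τ) :=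
    ⟨1 - t / τ, t / τ, by rw [sub_nonneg, div_le_one hτ]; exact ht.2,
      div_nonneg ht.1 hτ.le, by ring, rfl⟩
  have hinf : sInf {r : ℝ | ∃ z ∈ segment ℝ (x 0) (x τ), r = f (x t - z)} ≤ f (x t - z) := by
    refine csInf_le ⟨0, ?_⟩ ⟨z, hzmem, rfl⟩
    rintro r ⟨w, -, rfl⟩
    exact hf.1 _
  refine hinf.trans ?_
  obtain ⟨φ, hφ, hφle⟩ := exists_norming_functional hf (x t - z)
  let Φ : (Fin d → ℝ) →L[ℝ] ℝ := LinearMap.toContinuousLinearMap φ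
  have key := le_chord_add (M := M) hτ (g := fun s => φ (x s)) (g' := fun s => φ (x' s))
    (g'' := fun s => φ (x'' s))
    (fun s hs => Φ.hasFDerivAt.comp_hasDerivWithinAt s (hx' s hs))
    (fun s hs => Φ.hasFDerivAt.comp_hasDerivWithinAt s (hx'' s hs))
    (fun s hs => by
      -- `φ ≤ f` at `-x''(s)` gives the lower bound, since `f` is even.
      have h1 := hφle ((-1 : ℝ) • x'' s)
      rw [hf.2.2.1, map_smul, smul_eq_mul, abs_neg, abs_one] at h1
      linarith [hle s hs]) ht
  rw [← hφ, map_sub, hz, map_add, map_smul, map_smul, smul_eq_mul, smul_eq_mul]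
  nlinarith [mul_nonneg hM0 (sq_nonneg (τ - 2 * t))]
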